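/- For every N ∈ ℕ with N ≥ 1 and all f, g ∈ L²(Ω, μ; ℂ) with g ≥ 0 μ-a.e., if K^N f = λ^N f + g then g = 0 μ-a.e. -/

import Mathlib

open MeasureTheory
open scoped ENNReal
noncomputable section

/-- Iterated integral kernels: `iterKernel μ k n` is the kernel `k_{n+1}` of the paper,
with `iterKernel μ k 0 = k₁ = k` and
`k_{N+1}(x,y) = ∫ k_N(x,z) k(z,y) dμ(z)`. -/
def iterKernel {Ω : Type*} [MeasurableSpace Ω] (μ : Measure Ω) (k : Ω → Ω → ℝ) :
    ℕ → Ω → Ω → ℝ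
  | 0 => k
  | n + 1 => fun x y => ∫ z, iterKernel μ k n x z * k z y ∂μ

open Filter Topology ContinuousLinearMap

section Abstract
variable {H : Type*} [NormedAddCommGroup H] [InnerProductSpace ℂ H] [CompleteSpace H]

theorem hs_approx (T : H →L[ℂ] H) (C : ℝ)
    (hC : ∀ (n : ℕ) (e : Fin n → H), Orthonormal ℂ e → ∑ i, ‖T (e i)‖ ^ 2 ≤ C)
    (δ : ℝ) (hδ : 0 < δ) :
    ∃ P : H →L[ℂ] H, IsCompactOperator P ∧ adjoint P = P ∧ ‖T - T ∘L P‖ ≤ δ := by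
  let A : Set ℝ := {a | ∃ (n : ℕ) (e : Fin n → H), Orthonormal ℂ e ∧ a = ∑ i, ‖T (e i)‖ ^ 2}
  have hbdd : BddAbove A := ⟨C, by rintro a ⟨n, e, he, rfl⟩; exact hC n e he⟩
  have hne : A.Nonempty := ⟨_, 0, ![], by simp [Orthonormal, Pairwise], rfl⟩
  obtain ⟨a, ⟨n, e, he, rfl⟩, ha⟩ := exists_lt_of_lt_csSup hne
    (show sSup A - δ ^ 2 < sSup A by have := pow_pos hδ 2; linarith)
  let U : Submodule ℂ H := Submodule.span ℂ (Set.range e)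
  have : FiniteDimensional ℂ U := FiniteDimensional.span_of_finite ℂ (Set.finite_range e)
  have hunit : ∀ v ∈ Uᗮ, ‖v‖ = 1 → ‖T v‖ ≤ δ := by
    intro v hv hv1
    have h1 : Orthonormal ℂ (Matrix.vecCons v e) := by
      rw [orthonormal_vecCons_iff]
      refine ⟨hv1, fun i => ?_, he⟩
      exact (Submodule.mem_orthogonal' U v).1 hv _ (Submodule.subset_span ⟨i, rfl⟩)
    have h2 := le_csSup hbdd (show ∑ i, ‖T (Matrix.vecCons v e i)‖ ^ 2 ∈ A from ⟨_, _, h1, rfl⟩)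
    rw [Fin.sum_univ_succ] at h2
    simp only [Matrix.cons_val_zero, Matrix.cons_val_succ] at h2
    exact (sq_le_sq₀ (norm_nonneg _) hδ.le).1 (by linarith)
  have hall : ∀ v ∈ Uᗮ, ‖T v‖ ≤ δ * ‖v‖ := by
    intro v hv
    by_cases h0 : v = 0
    · simp [h0]
    have hn : ‖v‖ ≠ 0 := by simpa using h0
    have := hunit ((‖v‖⁻¹ : ℂ) • v) (Submodule.smul_mem _ _ hv) (by
      rw [norm_smul]; simp [hn])
    rw [map_smul, norm_smul] at this
    simp only [norm_inv, Complex.norm_real, norm_norm] at this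
    rwa [inv_mul_le_iff₀ (by positivity), mul_comm] at this
  refine ⟨U.starProjection, ?_, ?_, ?_⟩
  · have := (isCompactOperator_of_locallyCompactSpace_rng (U.subtypeL)).comp_clm U.orthogonalProjectionOnto
    exact this
  · exact (isSelfAdjoint_iff').1 (isSelfAdjoint_starProjection U)
  · refine ContinuousLinearMap.opNorm_le_bound _ hδ.le fun x => ?_
    have h1 : x - U.starProjection x ∈ Uᗮ := Submodule.sub_starProjection_mem_orthogonal x
    have h2 := hall _ h1
    have h3 : ‖x - U.starProjection x‖ ≤ ‖x‖ := by
      rw [← Submodule.starProjection_orthogonal_val]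
      exact Submodule.norm_starProjection_apply_le _ _
    calc _ = ‖T (x - U.starProjection x)‖ := by simp
      _ ≤ _ := h2
      _ ≤ _ := by gcongr

theorem hs_compact (T : H →L[ℂ] H) (C : ℝ)
    (hC : ∀ (n : ℕ) (e : Fin n → H), Orthonormal ℂ e → ∑ i, ‖T (e i)‖ ^ 2 ≤ C) :
    IsCompactOperator T ∧ IsCompactOperator (adjoint T) := by
  have hx : ∀ n : ℕ, ∃ P : H →L[ℂ] H, IsCompactOperator P ∧ adjoint P = P ∧
      ‖T - T ∘L P‖ ≤ 1 / ((n : ℝ) + 1) :=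
    fun n => hs_approx T C hC _ (by positivity)
  choose P hP hPa hPn using hx
  have hl : Tendsto (fun n => T ∘L P n) atTop (𝓝 T) := by
    rw [tendsto_iff_norm_sub_tendsto_zero]
    refine squeeze_zero (fun _ => norm_nonneg _) (fun n => ?_)
      (tendsto_one_div_add_atTop_nhds_zero_nat (𝕜 := ℝ))
    rw [norm_sub_rev]; exact hPn n
  constructor
  · exact isCompactOperator_of_tendsto hl (Eventually.of_forall fun n => (hP n).clm_comp T)
  · have hl2 := ((adjoint : (H →L[ℂ] H) ≃ₗᵢ⋆[ℂ] _).continuous.tendsto T).comp hl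
    refine isCompactOperator_of_tendsto hl2 (Eventually.of_forall fun n => ?_)
    simp only [Function.comp, adjoint_comp, hPa]
    exact (hP n).comp_clm _

theorem summable_pow_adjoint [Nontrivial H] (T : H →L[ℂ] H) (s : ℝ)
    (hs : (spectralRadius ℂ T).toReal < s) :
    Summable fun n : ℕ => (((s : ℂ)⁻¹ • adjoint T) ^ n) := by
  have hfin : spectralRadius ℂ T ≠ ⊤ :=
    ((spectrum.spectralRadius_le_nnnorm T).trans_lt ENNReal.coe_lt_top).ne
  obtain ⟨t, ht1, ht2⟩ := exists_between hs
  have h0 : 0 ≤ (spectralRadius ℂ T).toReal := ENNReal.toReal_nonneg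
  have ht0 : 0 < t := h0.trans_lt ht1
  have hs0 : 0 < s := ht0.trans ht2
  have hev := (spectrum.pow_norm_pow_one_div_tendsto_nhds_spectralRadius T).eventually
    (gt_mem_nhds ((ENNReal.lt_ofReal_iff_toReal_lt hfin).2 ht1))
  have hg : Summable fun n : ℕ => (t / s) ^ n :=
    summable_geometric_of_lt_one (by positivity) (by rw [div_lt_one hs0]; exact ht2)
  refine Summable.of_norm_bounded_eventually_nat hg ?_
  filter_upwards [hev, eventually_ge_atTop 1] with n hn hn1
  rw [ENNReal.ofReal_lt_ofReal_iff ht0] at hn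
  have hTn : ‖T ^ n‖ ≤ t ^ n := by
    have := pow_le_pow_left₀ (by positivity) hn.le n
    rwa [← Real.rpow_natCast (‖T ^ n‖ ^ _), ← Real.rpow_mul (norm_nonneg _),
      one_div_mul_cancel (by positivity), Real.rpow_one] at this
  have hadj : ‖(adjoint T) ^ n‖ = ‖T ^ n‖ := by
    rw [← star_eq_adjoint, ← star_pow, norm_star]
  rw [smul_pow, norm_smul, hadj, norm_pow, norm_inv, Complex.norm_real, Real.norm_of_nonneg hs0.le,
    div_pow, inv_pow, div_eq_inv_mul]
  gcongr

end Abstract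

section Cone
variable {Ω : Type*} [MeasurableSpace Ω] {μ : Measure Ω}

/-- nonnegative elements of complex L2 -/
def PosL (f : Lp ℂ 2 μ) : Prop := ∀ᵐ x ∂μ, 0 ≤ (f x).re ∧ (f x).im = 0

theorem PosL.zero : PosL (0 : Lp ℂ 2 μ) := by
  filter_upwards [Lp.coeFn_zero ℂ 2 μ] with x hx
  rw [hx]; simp

theorem PosL.add {f g : Lp ℂ 2 μ} (hf : PosL f) (hg : PosL g) : PosL (f + g) := by
  filter_upwards [hf, hg, Lp.coeFn_add f g] with x h1 h2 h3
  rw [h3]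
  simp only [Pi.add_apply, Complex.add_re, Complex.add_im, h1.2, h2.2, add_zero, and_true]
  linarith [h1.1, h2.1]

theorem PosL.smul {f : Lp ℂ 2 μ} (hf : PosL f) {c : ℝ} (hc : 0 ≤ c) : PosL ((c : ℂ) • f) := by
  filter_upwards [hf, Lp.coeFn_smul (c : ℂ) f] with x h1 h3
  rw [h3]
  simp [h1.2, mul_nonneg hc h1.1]

theorem lipschitz_absC : LipschitzWith 1 (fun z : ℂ => ((‖z‖ : ℝ) : ℂ)) := by
  refine LipschitzWith.of_dist_le_mul fun x y => ?_
  rw [Complex.dist_eq, ← Complex.ofReal_sub, Complex.norm_real, dist_eq_norm]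
  simpa using abs_norm_sub_norm_le x y

/-- the modulus map on complex L2 -/
def absL (f : Lp ℂ 2 μ) : Lp ℂ 2 μ := lipschitz_absC.compLp (by simp) f

theorem absL_coe (f : Lp ℂ 2 μ) : ∀ᵐ x ∂μ, absL f x = ((‖f x‖ : ℝ) : ℂ) :=
  lipschitz_absC.coeFn_compLp (by simp) f

theorem absL_continuous : Continuous (absL : Lp ℂ 2 μ → Lp ℂ 2 μ) :=
  lipschitz_absC.continuous_compLp (by simp)

theorem absL_pos (f : Lp ℂ 2 μ) : PosL (absL f) := by
  filter_upwards [absL_coe f] with x hx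
  simp [hx]

theorem posL_iff (f : Lp ℂ 2 μ) : PosL f ↔ absL f = f := by
  constructor
  · intro h
    apply Lp.ext
    filter_upwards [absL_coe f, h] with x hx hp
    rw [hx]
    have : f x = ((f x).re : ℂ) := by apply Complex.ext <;> simp [hp.2]
    rw [this, Complex.norm_real, Real.norm_of_nonneg hp.1]
  · intro h; rw [← h]; exact absL_pos f

theorem isClosed_posL : IsClosed {f : Lp ℂ 2 μ | PosL f} := by
  simp_rw [posL_iff]
  exact isClosed_eq absL_continuous continuous_id

theorem absL_ne_zero {f : Lp ℂ 2 μ} (h : f ≠ 0) : absL f ≠ 0 := by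
  intro h0
  apply h
  apply Lp.ext
  filter_upwards [absL_coe f, Lp.coeFn_zero ℂ 2 μ] with x hx h1
  rw [h0] at hx
  rw [h1] at hx ⊢
  simpa using hx.symm

theorem inner_posL {f g : Lp ℂ 2 μ} (hf : PosL f) (hg : PosL g) :
    0 ≤ (inner ℂ f g).re ∧ (inner ℂ f g).im = 0 := by
  have h : inner ℂ f g = ((∫ x, (f x).re * (g x).re ∂μ : ℝ) : ℂ) := by
    rw [L2.inner_def, ← integral_complex_ofReal]
    apply integral_congr_ae
    filter_upwards [hf, hg] with x h1 h2
    apply Complex.ext <;> simp [h1.2, h2.2]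
    ring
  rw [h]
  refine ⟨?_, Complex.ofReal_im _⟩
  rw [Complex.ofReal_re]
  apply integral_nonneg_of_ae
  filter_upwards [hf, hg] with x h1 h2
  exact mul_nonneg h1.1 h2.1

theorem posL_indicator {s : Set Ω} (hs : MeasurableSet s) (hμ : μ s ≠ ⊤) :
    PosL (indicatorConstLp 2 hs hμ (1 : ℂ)) := by
  filter_upwards [indicatorConstLp_coeFn (p := 2) (hs := hs) (hμs := hμ) (c := (1 : ℂ))] with x hx
  rw [hx]
  by_cases h : x ∈ s <;> simp [h]

theorem posL_of_inner [SigmaFinite μ] {u : Lp ℂ 2 μ}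
    (h : ∀ f : Lp ℂ 2 μ, PosL f → 0 ≤ (inner ℂ f u).re ∧ (inner ℂ f u).im = 0) : PosL u := by
  have hInt : ∀ s, MeasurableSet s → μ s < ⊤ → IntegrableOn (fun x => u x) s μ :=
    fun s hs hμ => integrableOn_Lp_of_measure_ne_top u (by norm_num) hμ.ne
  have key : ∀ s, MeasurableSet s → μ s < ⊤ →
      0 ≤ ∫ x in s, (u x).re ∂μ ∧ ∫ x in s, (u x).im ∂μ = 0 := by
    intro s hs hμ
    have h1 := h _ (posL_indicator hs hμ.ne)
    rw [L2.inner_indicatorConstLp_one hs hμ.ne] at h1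
    have e1 : ∫ x in s, (u x).re ∂μ = (∫ x in s, u x ∂μ).re := integral_re (hInt s hs hμ)
    have e2 : ∫ x in s, (u x).im ∂μ = (∫ x in s, u x ∂μ).im := integral_im (hInt s hs hμ)
    rw [e1, e2]; exact h1
  have a1 := ae_nonneg_of_forall_setIntegral_nonneg_of_sigmaFinite
    (f := fun x => (u x).re) (fun s hs hμ => (hInt s hs hμ).re) (fun s hs hμ => (key s hs hμ).1)
  have a2 := ae_eq_zero_of_forall_setIntegral_eq_of_sigmaFinite
    (f := fun x => (u x).im) (fun s hs hμ => (hInt s hs hμ).im) (fun s hs hμ => (key s hs hμ).2)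
  filter_upwards [a1, a2] with x h1 h2
  exact ⟨h1, h2⟩

theorem adjoint_posL [SigmaFinite μ] {K : Lp ℂ 2 μ →L[ℂ] Lp ℂ 2 μ}
    (hK : ∀ f, PosL f → PosL (K f)) {f : Lp ℂ 2 μ} (hf : PosL f) : PosL (adjoint K f) := by
  apply posL_of_inner
  intro g hg
  rw [adjoint_inner_right]
  exact inner_posL (hK g hg) hf

/-- the resolvent of the adjoint is positive -/
theorem exists_resolvent [SigmaFinite μ] [Nontrivial (Lp ℂ 2 μ)] {K : Lp ℂ 2 μ →L[ℂ] Lp ℂ 2 μ}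
    (hK : ∀ f, PosL f → PosL (K f)) {s : ℝ} (hs : (spectralRadius ℂ K).toReal < s)
    {w : Lp ℂ 2 μ} (hw : PosL w) :
    ∃ ψ : Lp ℂ 2 μ, PosL ψ ∧ adjoint K ψ = (s : ℂ) • ψ - w := by
  have h0 : 0 ≤ (spectralRadius ℂ K).toReal := ENNReal.toReal_nonneg
  have hs0 : 0 < s := h0.trans_lt hs
  have hsc : (s : ℂ) ≠ 0 := by exact_mod_cast hs0.ne'
  have hsum := summable_pow_adjoint K s hs
  set A := (s : ℂ)⁻¹ • adjoint K with hA
  have hgeo := hsum.one_sub_mul_tsum_pow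
  have hApos : ∀ f, PosL f → PosL (A f) := by
    intro f hf
    have := (adjoint_posL hK hf).smul (inv_nonneg.2 hs0.le)
    simpa [hA] using this
  have hApow : ∀ n f, PosL f → PosL ((A ^ n) f) := by
    intro n
    induction n with
    | zero => intro f hf; simpa using hf
    | succ n ih => intro f hf; rw [pow_succ]; exact ih _ (hApos f hf)
  have hRpos : PosL ((∑' n, A ^ n) w) := by
    have hh : HasSum (fun n => (A ^ n) w) ((∑' n, A ^ n) w) :=
      hsum.hasSum.mapL (ContinuousLinearMap.apply ℂ (Lp ℂ 2 μ) w)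
    refine isClosed_posL.mem_of_tendsto hh (Eventually.of_forall fun S => ?_)
    refine Finset.sum_induction _ (fun f => PosL f) (fun a b => PosL.add) PosL.zero ?_
    exact fun n _ => hApow n w hw
  refine ⟨((s⁻¹ : ℝ) : ℂ) • (∑' n, A ^ n) w, hRpos.smul (inv_nonneg.2 hs0.le), ?_⟩
  have h1 : (∑' n, A ^ n) w - A ((∑' n, A ^ n) w) = w := by
    have := congrArg (fun T : Lp ℂ 2 μ →L[ℂ] Lp ℂ 2 μ => T w) hgeo
    simpa [sub_mul] using this
  have h2 : adjoint K (((s⁻¹ : ℝ) : ℂ) • (∑' n, A ^ n) w) = A ((∑' n, A ^ n) w) := by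
    simp [hA]
  rw [h2, smul_smul, Complex.ofReal_inv, mul_inv_cancel₀ hsc, one_smul, eq_sub_iff_add_eq,
    add_comm, ← eq_sub_iff_add_eq]
  exact h1.symm

theorem resolvent_bound {K : Lp ℂ 2 μ →L[ℂ] Lp ℂ 2 μ} {s c : ℝ} {w ψ : Lp ℂ 2 μ}
    (hψ : PosL ψ) (hψw : adjoint K ψ = (s : ℂ) • ψ - w) (hq : PosL (K w - (c : ℂ) • w)) :
    ‖w‖ ^ 2 ≤ (s - c) * (inner ℂ ψ w).re := by
  have h1 : inner ℂ (adjoint K ψ) w = inner ℂ ψ (K w) := adjoint_inner_left K w ψ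
  have h2 := (inner_posL hψ hq).1
  rw [hψw, inner_sub_left, inner_smul_left] at h1
  rw [inner_sub_right, inner_smul_right, ← h1, inner_self_eq_norm_sq_to_K] at h2
  simp only [Complex.conj_ofReal, Complex.sub_re, Complex.re_ofReal_mul] at h2
  have h3 : ((‖w‖ : ℂ) ^ 2).re = ‖w‖ ^ 2 := by norm_cast
  simp only [Complex.coe_algebraMap] at h2
  rw [h3] at h2
  linarith

theorem spectralRadius_ge [SigmaFinite μ] {K : Lp ℂ 2 μ →L[ℂ] Lp ℂ 2 μ}
    (hK : ∀ f, PosL f → PosL (K f)) {c : ℝ} {w : Lp ℂ 2 μ} (hw : PosL w) (hw0 : w ≠ 0)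
    (hq : PosL (K w - (c : ℂ) • w)) : c ≤ (spectralRadius ℂ K).toReal := by
  have : Nontrivial (Lp ℂ 2 μ) := ⟨w, 0, hw0⟩
  by_contra! hlt
  obtain ⟨ψ, h1, h2⟩ := exists_resolvent hK hlt hw
  have := resolvent_bound h1 h2 hq
  have : 0 < ‖w‖ := norm_pos_iff.2 hw0
  nlinarith

theorem krein_rutman_adjoint [SigmaFinite μ] {K : Lp ℂ 2 μ →L[ℂ] Lp ℂ 2 μ}
    (hK : ∀ f, PosL f → PosL (K f))
    (habs : ∀ f, PosL (K (absL f) - absL (K f)))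
    (hc : IsCompactOperator K) (hca : IsCompactOperator (adjoint K))
    [Nontrivial (Lp ℂ 2 μ)] (hr : 0 < (spectralRadius ℂ K).toReal) :
    ∃ φ : Lp ℂ 2 μ, PosL φ ∧ φ ≠ 0 ∧
      adjoint K φ = ((spectralRadius ℂ K).toReal : ℂ) • φ := by
  set r := (spectralRadius ℂ K).toReal with hrdef
  obtain ⟨z, hz, hzr⟩ := spectrum.exists_nnnorm_eq_spectralRadius K
  have hzn : ‖z‖ = r := by rw [hrdef, ← hzr]; simp
  have hz0 : z ≠ 0 := by rw [← norm_pos_iff, hzn]; exact hr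
  obtain ⟨v, hv⟩ := ((hc.hasEigenvalue_iff_mem_spectrum hz0).2 hz).exists_hasEigenvector
  have hv0 : v ≠ 0 := hv.2
  have hKv : K v = z • v := hv.apply_eq_smul
  set w := absL v with hwdef
  have hw : PosL w := absL_pos v
  have hw0 : w ≠ 0 := absL_ne_zero hv0
  have hwn : 0 < ‖w‖ := norm_pos_iff.2 hw0
  have hq : PosL (K w - (r : ℂ) • w) := by
    have e : absL (K v) = (r : ℂ) • w := by
      apply Lp.ext
      filter_upwards [absL_coe (K v), absL_coe v, Lp.coeFn_smul (r : ℂ) w,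
        Lp.coeFn_smul z v] with x h1 h2 h3 h4
      rw [h1, h3, hKv, h4, Pi.smul_apply, Pi.smul_apply, hwdef, h2, ← hzn]
      simp
    rw [← e]; exact habs v
  let s : ℕ → ℝ := fun n => r + 1 / ((n : ℝ) + 1)
  have hsr : ∀ n, r < s n := fun n => by
    have : 0 < 1 / ((n : ℝ) + 1) := by positivity
    simp only [s]; linarith
  have hslim : Tendsto s atTop (𝓝 r) := by
    simpa [s] using (tendsto_one_div_add_atTop_nhds_zero_nat (𝕜 := ℝ)).const_add r
  choose ψ hψ hψe using fun n => exists_resolvent hK (hsr n) hw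
  have hb : ∀ n, ‖w‖ ≤ (s n - r) * ‖ψ n‖ := by
    intro n
    have h1 := resolvent_bound (hψ n) (hψe n) hq
    have h2 : (inner ℂ (ψ n) w).re ≤ ‖ψ n‖ * ‖w‖ := re_inner_le_norm (𝕜 := ℂ) _ _
    have h3 : 0 ≤ s n - r := by linarith [hsr n]
    have h4 := mul_le_mul_of_nonneg_left h2 h3
    have : ‖w‖ * ‖w‖ ≤ ((s n - r) * ‖ψ n‖) * ‖w‖ := by nlinarith
    exact le_of_mul_le_mul_right this hwn
  have hψ0 : ∀ n, 0 < ‖ψ n‖ := by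
    intro n
    by_contra! h
    have : ‖ψ n‖ = 0 := le_antisymm h (norm_nonneg _)
    have := hb n
    simp_all
  let t : ℕ → ℝ := fun n => ‖ψ n‖⁻¹
  have ht0 : ∀ n, 0 ≤ t n := fun n => inv_nonneg.2 (norm_nonneg _)
  have htlim : Tendsto t atTop (𝓝 0) := by
    have h1 : Tendsto (fun n => (s n - r) / ‖w‖) atTop (𝓝 0) := by
      simpa using (hslim.sub_const r).div_const ‖w‖
    refine squeeze_zero ht0 (fun n => ?_) h1
    simp only [t]
    rw [inv_eq_one_div, div_le_div_iff₀ (hψ0 n) hwn, one_mul]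
    exact hb n
  let φ : ℕ → Lp ℂ 2 μ := fun n => (t n : ℂ) • ψ n
  have hφp : ∀ n, PosL (φ n) := fun n => (hψ n).smul (ht0 n)
  have hφn : ∀ n, ‖φ n‖ = 1 := by
    intro n
    simp only [φ, t]
    rw [norm_smul, Complex.norm_real, norm_inv, norm_norm, inv_mul_cancel₀ (hψ0 n).ne']
  have hφe : ∀ n, φ n = ((s n)⁻¹ : ℂ) • (adjoint K (φ n) + (t n : ℂ) • w) := by
    intro n
    have hsn : (s n : ℂ) ≠ 0 := by exact_mod_cast (hr.trans (hsr n)).ne'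
    rw [eq_inv_smul_iff₀ hsn]
    simp only [φ, map_smul, hψe n, smul_sub]
    rw [smul_comm]; abel
  obtain ⟨y, -, θ, hθ, hy⟩ := (hca.isCompact_closure_image_closedBall 1 :
    IsCompact (closure (adjoint K '' Metric.closedBall 0 1))).tendsto_subseq
    (x := fun n => adjoint K (φ n))
    (fun n => subset_closure ⟨φ n, by simp [hφn n], rfl⟩)
  have hlim : Tendsto (fun n => φ (θ n)) atTop (𝓝 ((r : ℂ)⁻¹ • (y + (0 : ℂ) • w))) := by
    have e : (fun n => φ (θ n)) = fun n => ((s (θ n))⁻¹ : ℂ) •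
      (adjoint K (φ (θ n)) + (t (θ n) : ℂ) • w) := by
      funext n; exact hφe _
    rw [e]
    have c1 : Tendsto (fun n => ((s (θ n) : ℝ) : ℂ)) atTop (𝓝 (r : ℂ)) :=
      (Complex.continuous_ofReal.tendsto r).comp (hslim.comp hθ.tendsto_atTop)
    have c2 : Tendsto (fun n => ((t (θ n) : ℝ) : ℂ)) atTop (𝓝 (0 : ℂ)) := by
      have := (Complex.continuous_ofReal.tendsto 0).comp (htlim.comp hθ.tendsto_atTop)
      rwa [Complex.ofReal_zero] at this
    exact (c1.inv₀ (by exact_mod_cast hr.ne')).smul (hy.add (c2.smul_const w))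
  rw [zero_smul, add_zero] at hlim
  refine ⟨(r : ℂ)⁻¹ • y, ?_, ?_, ?_⟩
  · exact isClosed_posL.mem_of_tendsto hlim (Eventually.of_forall fun n => hφp _)
  · have := hlim.norm
    simp only [hφn] at this
    have h1 := tendsto_nhds_unique this tendsto_const_nhds
    intro h0; rw [h0, norm_zero] at h1; exact zero_ne_one h1
  · have h1 := ((adjoint K).continuous.tendsto _).comp hlim
    have h2 := tendsto_nhds_unique h1 hy
    rw [h2, smul_smul, mul_inv_cancel₀ (by exact_mod_cast hr.ne'), one_smul]

end Cone

section Kernel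
variable {Ω : Type*} [MeasurableSpace Ω] {μ : Measure Ω}

theorem norm_sq_lintegral (f : Lp ℂ 2 μ) :
    ENNReal.ofReal (‖f‖ ^ 2) = ∫⁻ x, ENNReal.ofReal (‖f x‖ ^ 2) ∂μ := by
  have h : ((‖f‖ ^ 2 : ℝ) : ℂ) = ((∫ x, ‖f x‖ ^ 2 ∂μ : ℝ) : ℂ) := by
    have := inner_self_eq_norm_sq_to_K (𝕜 := ℂ) f
    rw [L2.inner_def] at this
    rw [← integral_complex_ofReal]
    push_cast
    simp only [inner_self_eq_norm_sq_to_K] at this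
    exact this.symm
  have h' : ‖f‖ ^ 2 = ∫ x, ‖f x‖ ^ 2 ∂μ := by exact_mod_cast h
  rw [h', ofReal_integral_eq_lintegral_ofReal]
  · exact (memLp_two_iff_integrable_sq_norm (Lp.aestronglyMeasurable f)).1 (Lp.memLp f)
  · exact Eventually.of_forall fun x => by positivity

variable {k : Ω → Ω → ℝ}

theorem ae_memLp [SigmaFinite μ] (hkmeas : Measurable (Function.uncurry k))
    (hL2 : ∫⁻ x, ∫⁻ y, ENNReal.ofReal (k x y ^ 2) ∂μ ∂μ < ⊤) :
    ∀ᵐ x ∂μ, MemLp (fun y => (k x y : ℂ)) 2 μ := by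
  have hm : Measurable fun x => ∫⁻ y, ENNReal.ofReal (k x y ^ 2) ∂μ :=
    Measurable.lintegral_prod_right' (f := fun p : Ω × Ω => ENNReal.ofReal (k p.1 p.2 ^ 2))
      (by have : Measurable fun p : Ω × Ω => k p.1 p.2 := hkmeas
          fun_prop)
  filter_upwards [ae_lt_top hm hL2.ne] with x hx
  have hmx : Measurable (k x) := hkmeas.of_uncurry_left
  have hmc : Measurable fun y => (k x y : ℂ) := by fun_prop
  rw [memLp_two_iff_integrable_sq_norm hmc.aestronglyMeasurable]
  refine ⟨by fun_prop, ?_⟩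
  rw [hasFiniteIntegral_iff_ofReal (Eventually.of_forall fun y => by positivity)]
  simpa using hx

theorem kernel_hs [SigmaFinite μ] (hkmeas : Measurable (Function.uncurry k))
    (hL2 : ∫⁻ x, ∫⁻ y, ENNReal.ofReal (k x y ^ 2) ∂μ ∂μ < ⊤)
    {K : Lp ℂ 2 μ →L[ℂ] Lp ℂ 2 μ}
    (hK : ∀ f : Lp ℂ 2 μ, ∀ᵐ x ∂μ, (K f : Lp ℂ 2 μ) x = ∫ y, (k x y : ℂ) * f y ∂μ)
    (n : ℕ) (e : Fin n → Lp ℂ 2 μ) (he : Orthonormal ℂ e) :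
    ∑ i, ‖K (e i)‖ ^ 2 ≤ (∫⁻ x, ∫⁻ y, ENNReal.ofReal (k x y ^ 2) ∂μ ∂μ).toReal := by
  rw [← ENNReal.ofReal_le_iff_le_toReal hL2.ne,
    ENNReal.ofReal_sum_of_nonneg fun i _ => by positivity]
  simp_rw [norm_sq_lintegral]
  rw [← lintegral_finsetSum']
  swap
  · intro i _
    exact ((Lp.aestronglyMeasurable (K (e i))).norm.aemeasurable.pow_const 2).ennreal_ofReal
  apply lintegral_mono_ae
  filter_upwards [ae_memLp hkmeas hL2, ae_all_iff.2 fun i => hK (e i)] with x hx hKx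
  rw [← ENNReal.ofReal_sum_of_nonneg fun i _ => by positivity]
  have h1 : ∀ i, ‖K (e i) x‖ = ‖(inner ℂ (e i) (hx.toLp))‖ := by
    intro i
    rw [hKx i, norm_inner_symm, L2.inner_def]
    congr 1
    apply integral_congr_ae
    filter_upwards [hx.coeFn_toLp] with y hy
    rw [hy]
    simp [mul_comm]
  simp_rw [h1]
  refine (ENNReal.ofReal_le_ofReal (he.sum_inner_products_le (hx.toLp) (s := Finset.univ))).trans ?_
  rw [norm_sq_lintegral]
  apply le_of_eq
  apply lintegral_congr_ae
  filter_upwards [hx.coeFn_toLp] with y hy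
  rw [hy]; simp

theorem kernel_pos (hpos : ∀ x y, 0 ≤ k x y)
    {K : Lp ℂ 2 μ →L[ℂ] Lp ℂ 2 μ}
    (hK : ∀ f : Lp ℂ 2 μ, ∀ᵐ x ∂μ, (K f : Lp ℂ 2 μ) x = ∫ y, (k x y : ℂ) * f y ∂μ)
    (f : Lp ℂ 2 μ) (hf : PosL f) :
    PosL (K f) ∧ ∀ᵐ x ∂μ, (K f : Lp ℂ 2 μ) x = ((∫ y, k x y * (f y).re ∂μ : ℝ) : ℂ) := by
  have h : ∀ᵐ x ∂μ, (K f : Lp ℂ 2 μ) x = ((∫ y, k x y * (f y).re ∂μ : ℝ) : ℂ) := by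
    filter_upwards [hK f] with x hx
    rw [hx, ← integral_complex_ofReal]
    apply integral_congr_ae
    filter_upwards [hf] with y hy
    apply Complex.ext <;> simp [hy.2]
  refine ⟨?_, h⟩
  filter_upwards [h] with x hx
  rw [hx]
  refine ⟨?_, Complex.ofReal_im _⟩
  rw [Complex.ofReal_re]
  apply integral_nonneg_of_ae
  filter_upwards [hf] with y hy
  exact mul_nonneg (hpos x y) hy.1

theorem kernel_abs (hpos : ∀ x y, 0 ≤ k x y)
    {K : Lp ℂ 2 μ →L[ℂ] Lp ℂ 2 μ}
    (hK : ∀ f : Lp ℂ 2 μ, ∀ᵐ x ∂μ, (K f : Lp ℂ 2 μ) x = ∫ y, (k x y : ℂ) * f y ∂μ)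
    (f : Lp ℂ 2 μ) : PosL (K (absL f) - absL (K f)) := by
  filter_upwards [(kernel_pos hpos hK _ (absL_pos f)).2, hK f, absL_coe (K f),
    Lp.coeFn_sub (K (absL f)) (absL (K f))] with x h1 h2 h3 h4
  rw [h4, Pi.sub_apply, h1, h3, ← Complex.ofReal_sub]
  refine ⟨?_, Complex.ofReal_im _⟩
  rw [Complex.ofReal_re, sub_nonneg, h2]
  refine (norm_integral_le_integral_norm _).trans (le_of_eq ?_)
  apply integral_congr_ae
  filter_upwards [absL_coe f] with y hy
  rw [hy]
  simp [abs_of_nonneg (hpos x y)]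

theorem kernel_lintegral [SigmaFinite μ] (hkmeas : Measurable (Function.uncurry k))
    (hL2 : ∫⁻ x, ∫⁻ y, ENNReal.ofReal (k x y ^ 2) ∂μ ∂μ < ⊤) (hpos : ∀ x y, 0 ≤ k x y)
    {K : Lp ℂ 2 μ →L[ℂ] Lp ℂ 2 μ}
    (hK : ∀ f : Lp ℂ 2 μ, ∀ᵐ x ∂μ, (K f : Lp ℂ 2 μ) x = ∫ y, (k x y : ℂ) * f y ∂μ)
    (f : Lp ℂ 2 μ) (hf : PosL f) :
    ∀ᵐ x ∂μ, ∫⁻ y, ENNReal.ofReal (k x y) * ENNReal.ofReal (f y).re ∂μ =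
      ENNReal.ofReal ((K f : Lp ℂ 2 μ) x).re := by
  filter_upwards [(kernel_pos hpos hK f hf).2, ae_memLp hkmeas hL2] with x h1 h2
  rw [h1, Complex.ofReal_re, ofReal_integral_eq_lintegral_ofReal]
  · simp_rw [← ENNReal.ofReal_mul (hpos x _)]
  · have := (MemLp.integrable_mul h2 (Lp.memLp f)).re
    refine this.congr (Eventually.of_forall fun y => ?_)
    simp
  · filter_upwards [hf] with y hy
    exact mul_nonneg (hpos x y) hy.1

/-- extended nonnegative version of the iterated kernels -/
def eKer (μ : Measure Ω) (k : Ω → Ω → ℝ) : ℕ → Ω → Ω → ℝ≥0∞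
  | 0 => fun x y => ENNReal.ofReal (k x y)
  | n + 1 => fun x y => ∫⁻ z, eKer μ k n x z * ENNReal.ofReal (k z y) ∂μ

theorem eKer_measurable [SigmaFinite μ] (hkmeas : Measurable (Function.uncurry k)) (n : ℕ) :
    Measurable fun p : Ω × Ω => eKer μ k n p.1 p.2 := by
  have hk : Measurable fun p : Ω × Ω => k p.1 p.2 := hkmeas
  induction n with
  | zero => simp only [eKer]; fun_prop
  | succ n ih =>
    simp only [eKer]
    apply Measurable.lintegral_prod_right'
      (f := fun q : (Ω × Ω) × Ω => eKer μ k n q.1.1 q.2 * ENNReal.ofReal (k q.2 q.1.2))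
    have a1 : Measurable fun q : (Ω × Ω) × Ω => eKer μ k n q.1.1 q.2 :=
      ih.comp (g := fun p : Ω × Ω => eKer μ k n p.1 p.2)
        (f := fun q : (Ω × Ω) × Ω => (q.1.1, q.2)) (by fun_prop)
    have a2 : Measurable fun q : (Ω × Ω) × Ω => k q.2 q.1.2 :=
      hk.comp (f := fun q : (Ω × Ω) × Ω => (q.2, q.1.2)) (by fun_prop)
    exact a1.mul a2.ennreal_ofReal

theorem eKer_lintegral [SigmaFinite μ] (hkmeas : Measurable (Function.uncurry k))
    (hL2 : ∫⁻ x, ∫⁻ y, ENNReal.ofReal (k x y ^ 2) ∂μ ∂μ < ⊤) (hpos : ∀ x y, 0 ≤ k x y)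
    {K : Lp ℂ 2 μ →L[ℂ] Lp ℂ 2 μ}
    (hK : ∀ f : Lp ℂ 2 μ, ∀ᵐ x ∂μ, (K f : Lp ℂ 2 μ) x = ∫ y, (k x y : ℂ) * f y ∂μ) (n : ℕ) :
    ∀ (f : Lp ℂ 2 μ), PosL f →
    ∀ᵐ x ∂μ, ∫⁻ y, eKer μ k n x y * ENNReal.ofReal (f y).re ∂μ =
      ENNReal.ofReal (((K ^ (n + 1)) f : Lp ℂ 2 μ) x).re := by
  have hk : Measurable fun p : Ω × Ω => k p.1 p.2 := hkmeas
  induction n with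
  | zero => intro f hf; simpa [eKer] using kernel_lintegral hkmeas hL2 hpos hK f hf
  | succ n ih =>
    intro f hf
    have h0 := kernel_lintegral hkmeas hL2 hpos hK f hf
    filter_upwards [ih (K f) (kernel_pos hpos hK f hf).1] with x hx
    have e : (K ^ (n + 1 + 1)) f = (K ^ (n + 1)) (K f) := by rw [pow_succ]; rfl
    rw [e, ← hx]
    have hF : AEMeasurable (fun y => ENNReal.ofReal (f y).re) μ :=
      (Complex.measurable_re.comp_aemeasurable
        (Lp.aestronglyMeasurable f).aemeasurable).ennreal_ofReal
    have hmx : Measurable fun z => eKer μ k n x z :=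
      (eKer_measurable hkmeas n).comp (f := fun z => (x, z)) (by fun_prop)
    have hky : ∀ y, Measurable fun z => ENNReal.ofReal (k z y) := fun y =>
      (hk.comp (f := fun z => (z, y)) (by fun_prop)).ennreal_ofReal
    have hkz : ∀ z, Measurable fun y => ENNReal.ofReal (k z y) := fun z =>
      (hk.comp (f := fun y => (z, y)) (by fun_prop)).ennreal_ofReal
    calc ∫⁻ y, eKer μ k (n + 1) x y * ENNReal.ofReal (f y).re ∂μ
        = ∫⁻ y, ∫⁻ z, eKer μ k n x z * ENNReal.ofReal (k z y) * ENNReal.ofReal (f y).re ∂μ ∂μ := by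
          apply lintegral_congr
          intro y
          exact (lintegral_mul_const _ (hmx.mul (hky y))).symm
      _ = ∫⁻ z, ∫⁻ y, eKer μ k n x z * ENNReal.ofReal (k z y) * ENNReal.ofReal (f y).re ∂μ ∂μ := by
          apply lintegral_lintegral_swap
          have a1 : Measurable fun p : Ω × Ω => eKer μ k n x p.2 := hmx.comp measurable_snd
          have a2 : Measurable fun p : Ω × Ω => ENNReal.ofReal (k p.2 p.1) :=
            (hk.comp (f := fun p : Ω × Ω => (p.2, p.1)) (by fun_prop)).ennreal_ofReal
          exact (a1.mul a2).aemeasurable.mul hF.comp_fst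
      _ = ∫⁻ z, eKer μ k n x z * ENNReal.ofReal ((K f : Lp ℂ 2 μ) z).re ∂μ := by
          apply lintegral_congr_ae
          filter_upwards [h0] with z hz
          rw [← hz]
          simp_rw [mul_assoc]
          exact lintegral_const_mul'' _ ((hkz z).aemeasurable.mul hF)

end Kernel

theorem iterKernel_nonneg {Ω : Type*} [MeasurableSpace Ω] (μ : Measure Ω) (k : Ω → Ω → ℝ)
    (hpos : ∀ x y, 0 ≤ k x y) (n : ℕ) : ∀ x y, 0 ≤ iterKernel μ k n x y := by
  induction n with
  | zero => exact hpos
  | succ n ih => exact fun x y => integral_nonneg fun z => mul_nonneg (ih x z) (hpos z y)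

theorem iterKernel_le {Ω : Type*} [MeasurableSpace Ω] (μ : Measure Ω) (k : Ω → Ω → ℝ)
    (hpos : ∀ x y, 0 ≤ k x y) (n : ℕ) :
    ∀ x y, ENNReal.ofReal (iterKernel μ k n x y) ≤ eKer μ k n x y := by
  induction n with
  | zero => exact fun x y => le_rfl
  | succ n ih =>
    intro x y
    have hn := iterKernel_nonneg μ k hpos n
    by_cases hi : Integrable (fun z => iterKernel μ k n x z * k z y) μ
    · simp only [iterKernel, eKer]
      rw [ofReal_integral_eq_lintegral_ofReal hi
        (Eventually.of_forall fun z => mul_nonneg (hn x z) (hpos z y))]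
      apply lintegral_mono
      intro z
      simp only
      rw [ENNReal.ofReal_mul (hn x z)]
      gcongr
      exact ih x z
    · simp only [iterKernel]
      rw [integral_undef hi]; simp

/-- if `K^N f = λ^N f + g` with `g ≥ 0` μ-a.e. (and real), where `λ` is the
spectral radius of the positive integral operator `K`, then `g = 0`. -/
theorem statement16 {Ω : Type*} [MeasurableSpace Ω]
    (μ : Measure Ω) [SigmaFinite μ]
    (k : Ω → Ω → ℝ) (hkmeas : Measurable (Function.uncurry k))
    (hL2 : ∫⁻ x, ∫⁻ y, ENNReal.ofReal (k x y ^ 2) ∂μ ∂μ < ⊤)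
    (hpos : ∀ x y, 0 ≤ k x y)
    (S : Set Ω) (hS : MeasurableSet S) (hμS : 0 < μ S)
    (ε : ℝ) (hε : 0 < ε) (hkS : ∀ x ∈ S, ∀ y ∈ S, ε ≤ k x y)
    (hprim : ∃ N : ℕ, ∀ x y, 0 < iterKernel μ k N x y)
    (K : Lp ℂ 2 μ →L[ℂ] Lp ℂ 2 μ)
    (hK : ∀ f : Lp ℂ 2 μ, ∀ᵐ x ∂μ, (K f : Lp ℂ 2 μ) x = ∫ y, (k x y : ℂ) * f y ∂μ) :
    ∀ N : ℕ, 1 ≤ N → ∀ f g : Lp ℂ 2 μ,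
      (∀ᵐ x ∂μ, 0 ≤ (g x).re ∧ (g x).im = 0) →
      (K ^ N) f = (((spectralRadius ℂ K).toReal : ℂ) ^ N) • f + g →
      g = 0 := by
  intro N _ f g hg hfg
  have hg' : PosL g := hg
  have hKpos : ∀ f, PosL f → PosL (K f) := fun f hf => (kernel_pos hpos hK f hf).1
  obtain ⟨hc, hca⟩ := hs_compact K _ (kernel_hs hkmeas hL2 hK)
  -- positivity of the spectral radius
  obtain ⟨A, hAS, hA, hA0, hAtop⟩ : ∃ A ⊆ S, MeasurableSet A ∧ 0 < μ A ∧ μ A < ⊤ := by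
    obtain ⟨A, hA, hAm, h0, hlt⟩ := Measure.exists_subset_measure_lt_top hS hμS
    exact ⟨A, hAm, hA, h0, hlt⟩
  have hAr : 0 < μ.real A := ENNReal.toReal_pos hA0.ne' hAtop.ne
  let w : Lp ℂ 2 μ := indicatorConstLp 2 hA hAtop.ne (1 : ℂ)
  have hw : PosL w := posL_indicator hA hAtop.ne
  have hwc : w =ᵐ[μ] A.indicator fun _ => (1 : ℂ) := indicatorConstLp_coeFn
  have hw0 : w ≠ 0 := by
    intro h0
    have h1 := norm_indicatorConstLp (p := 2) (hs := hA) (hμs := hAtop.ne) (c := (1 : ℂ))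
      (by norm_num) (by norm_num)
    change ‖w‖ = _ at h1
    rw [h0, norm_zero] at h1
    have : 0 < ‖(1 : ℂ)‖ * μ.real A ^ (1 / (2 : ℝ≥0∞).toReal) := by
      rw [norm_one, one_mul]; exact Real.rpow_pos_of_pos hAr _
    linarith
  have hq : PosL (K w - ((ε * μ.real A : ℝ) : ℂ) • w) := by
    filter_upwards [(kernel_pos hpos hK w hw).2, hwc, ae_memLp hkmeas hL2,
      Lp.coeFn_sub (K w) (((ε * μ.real A : ℝ) : ℂ) • w),
      Lp.coeFn_smul ((ε * μ.real A : ℝ) : ℂ) w] with x h1 h2 hmem h3 h4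
    have h5 : ∫ y, k x y * (w y).re ∂μ = ∫ y in A, k x y ∂μ := by
      rw [← integral_indicator hA]
      apply integral_congr_ae
      filter_upwards [hwc] with y hy
      rw [hy]
      by_cases hyA : y ∈ A <;> simp [hyA]
    rw [h3, Pi.sub_apply, h4, Pi.smul_apply, h1, h2, h5]
    by_cases hx : x ∈ A
    · have h6 : ε * μ.real A ≤ ∫ y in A, k x y ∂μ := by
        have : IsFiniteMeasure (μ.restrict A) := ⟨by simpa using hAtop⟩
        have hInt : IntegrableOn (fun y => k x y) A μ := by
          have : IntegrableOn (fun y => (k x y : ℂ)) A μ :=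
            MemLp.integrable (q := 2) (by norm_num) (MemLp.restrict A hmem)
          exact Integrable.re this
        exact setIntegral_ge_of_const_le_real hA hAtop.ne
          (fun y hy => hkS x (hAS hx) y (hAS hy)) hInt
      simp only [hx, Set.indicator_of_mem, smul_eq_mul, mul_one, ← Complex.ofReal_sub]
      exact ⟨by rw [Complex.ofReal_re]; linarith, Complex.ofReal_im _⟩
    · simp only [hx, not_false_eq_true, Set.indicator_of_notMem, smul_zero, sub_zero]
      refine ⟨?_, Complex.ofReal_im _⟩
      rw [Complex.ofReal_re]
      exact integral_nonneg fun y => hpos x y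
  have hr : 0 < (spectralRadius ℂ K).toReal :=
    (mul_pos hε hAr).trans_le (spectralRadius_ge hKpos hw hw0 hq)
  have : Nontrivial (Lp ℂ 2 μ) := ⟨w, 0, hw0⟩
  obtain ⟨φ, hφ, hφ0, hφe⟩ :=
    krein_rutman_adjoint hKpos (kernel_abs hpos hK) hc hca hr
  set r := (spectralRadius ℂ K).toReal with hrdef
  have hpow : ∀ (n : ℕ) (h : Lp ℂ 2 μ), inner ℂ φ ((K ^ n) h) = (r : ℂ) ^ n * inner ℂ φ h := by
    intro n
    induction n with
    | zero => intro h; simp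
    | succ n ih =>
      intro h
      have e : (K ^ (n + 1)) h = (K ^ n) (K h) := by rw [pow_succ]; rfl
      rw [e, ih, ← adjoint_inner_left, hφe, inner_smul_left, Complex.conj_ofReal]
      ring
  have hφg : inner ℂ φ g = 0 := by
    have h1 := hpow N f
    rw [hfg, inner_add_right, inner_smul_right] at h1
    simpa using h1
  obtain ⟨m, hm⟩ := hprim
  have hKm : ∀ n, PosL ((K ^ n) g) := by
    intro n
    induction n with
    | zero => simpa using hg'
    | succ n ih => rw [pow_succ']; exact hKpos _ ih
  have hz : inner ℂ φ ((K ^ (m + 1)) g) = 0 := by rw [hpow, hφg, mul_zero]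
  have hz2 : ∀ᵐ x ∂μ, (φ x).re * (((K ^ (m + 1)) g : Lp ℂ 2 μ) x).re = 0 := by
    have hi := L2.integrable_inner (𝕜 := ℂ) φ ((K ^ (m + 1)) g)
    have e : ∀ᵐ x ∂μ, (inner ℂ (φ x) (((K ^ (m + 1)) g : Lp ℂ 2 μ) x)).re =
        (φ x).re * (((K ^ (m + 1)) g : Lp ℂ 2 μ) x).re := by
      filter_upwards [hφ, hKm (m + 1)] with x h1 h2
      simp [h1.2]
      ring
    have h1 : ∫ x, (inner ℂ (φ x) (((K ^ (m + 1)) g : Lp ℂ 2 μ) x)).re ∂μ = 0 := by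
      have h2 : ∫ x, (inner ℂ (φ x) (((K ^ (m + 1)) g : Lp ℂ 2 μ) x)).re ∂μ =
        (∫ x, inner ℂ (φ x) (((K ^ (m + 1)) g : Lp ℂ 2 μ) x) ∂μ).re := integral_re hi
      rw [h2, ← L2.inner_def, hz]; simp
    have hi' : Integrable (fun x => (inner ℂ (φ x) (((K ^ (m + 1)) g : Lp ℂ 2 μ) x)).re) μ :=
      hi.re
    rw [integral_eq_zero_iff_of_nonneg_ae ?_ hi'] at h1
    · filter_upwards [h1, e] with x h2 h3
      rw [← h3]; exact h2
    · filter_upwards [e, hφ, hKm (m + 1)] with x h3 h4 h5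
      simp only [Pi.zero_apply]
      rw [h3]
      exact mul_nonneg h4.1 h5.1
  by_contra hg0
  apply hφ0
  apply Lp.ext
  filter_upwards [hz2, hφ, eKer_lintegral hkmeas hL2 hpos hK m g hg',
    Lp.coeFn_zero ℂ 2 μ] with x h1 h2 h3 h4
  rw [h4]
  rcases mul_eq_zero.1 h1 with h | h
  · exact Complex.ext h h2.2
  · exfalso
    apply hg0
    rw [h, ENNReal.ofReal_zero, lintegral_eq_zero_iff'] at h3
    · apply Lp.ext
      filter_upwards [h3, hg', Lp.coeFn_zero ℂ 2 μ] with y h5 h6 h7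
      rw [h7]
      have h8 : eKer μ k m x y ≠ 0 :=
        ((ENNReal.ofReal_pos.2 (hm x y)).trans_le (iterKernel_le μ k hpos m x y)).ne'
      have h9 : ENNReal.ofReal (g y).re = 0 := by
        rcases mul_eq_zero.1 h5 with h | h
        · exact absurd h h8
        · exact h
      exact Complex.ext (le_antisymm (ENNReal.ofReal_eq_zero.1 h9) h6.1) h6.2
    · have hmx : Measurable fun z => eKer μ k m x z :=
        (eKer_measurable hkmeas m).comp (f := fun z => (x, z)) (by fun_prop)
      exact hmx.aemeasurable.mul (Complex.measurable_re.comp_aemeasurable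
        (Lp.aestronglyMeasurable g).aemeasurable).ennreal_ofReal

end
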